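/- arXiv:0705.3065 — 6 statements merged into one kernel-verified Lean document; each statement's English description precedes it below -/
import Mathlib

section
/- For every integer r ≥ 1 and all natural numbers n and k, the Euler coefficient satisfies ⟨n choose k⟩_r = ∑_{i=0}^{⌊k/r⌋} (-1)^i · C(n,i) · C(n+k-ri-1, k-ri), where C denotes the ordinary binomial coefficient and the identity is an identity of integers. -/
/-- The Euler coefficient `⟨n choose k⟩_r`: the coefficient of `t^k` in the
polynomial `(1 + t + t^2 + ⋯ + t^(r-1))^n`, viewed as an integer. -/
noncomputable def eulerCoeff (r n k : ℕ) : ℤ :=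
  ((∑ i ∈ Finset.range r, (Polynomial.X : Polynomial ℤ) ^ i) ^ n).coeff k

/-!
As a formal power series, `(1 + t + ⋯ + t^(r-1))^n = (1 - t^r)^n * (1 - t)^(-n)`. The binomial
theorem expands the first factor, and the coefficient of `t^j` in the second is the number
`C(n+j-1, j)` of multisets of size `j` on `n` elements; the Cauchy product gives the alternating
sum.
-/

open Finset PowerSeries

theorem one_sub_pow_eq_sum_range {R : Type*} [Ring R] (x : R) {n N : ℕ} (hN : n < N) :
    (1 - x) ^ n = ∑ i ∈ range N, ((-1 : ℤ) ^ i * n.choose i) • x ^ i := by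
  have binomial : (1 - x) ^ n = ∑ i ∈ range (n + 1), ((-1 : ℤ) ^ i * n.choose i) • x ^ i := by
    rw [sub_eq_neg_add, (Commute.one_right (-x)).add_pow]
    refine sum_congr rfl fun i _ ↦ ?_
    rw [neg_pow, one_pow, mul_one, zsmul_eq_mul, mul_assoc, ← Nat.cast_comm, ← mul_assoc]
    push_cast
    rfl
  rw [binomial]
  refine sum_subset (range_mono hN) fun i _ hi ↦ ?_
  rw [Nat.choose_eq_zero_of_lt (by simpa using hi), Nat.cast_zero, mul_zero, zero_smul]

theorem coeff_one_sub_X_pow_pow_mul {R : Type*} [Ring R] {r : ℕ} (hr : 0 < r) (n k : ℕ)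
    (f : R⟦X⟧) :
    coeff k ((1 - X ^ r) ^ n * f) =
      ∑ i ∈ range (k / r + 1), (-1) ^ i * (n.choose i : R) * coeff (k - r * i) f := by
  have filter_le : {i ∈ range (n + (k / r + 1)) | r * i ≤ k} = range (k / r + 1) := by
    ext i
    simp only [mem_filter, mem_range, mul_comm r, ← Nat.le_div_iff_mul_le hr]
    lia
  have coeff_term (i : ℕ) : coeff k (((-1 : ℤ) ^ i * n.choose i) • (X ^ r) ^ i * f) =
      if r * i ≤ k then (-1) ^ i * (n.choose i : R) * coeff (k - r * i) f else 0 := by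
    rw [smul_mul_assoc, map_zsmul, ← pow_mul, coeff_X_pow_mul', smul_ite, smul_zero, zsmul_eq_mul]
    push_cast
    rfl
  rw [one_sub_pow_eq_sum_range (X ^ r) (show n < n + (k / r + 1) by lia), sum_mul, map_sum,
    sum_congr rfl fun i _ ↦ coeff_term i, ← sum_filter, filter_le]

section CommRing

variable {R : Type*} [CommRing R]

theorem coeff_invOneSubPow (n k : ℕ) :
    coeff k (invOneSubPow R n).val = (n.multichoose k : R) := by
  cases n with
  | zero => cases k <;> simp [invOneSubPow_zero, coeff_one]
  | succ n =>
    rw [invOneSubPow_val_succ_eq_mk_add_choose, coeff_mk, Nat.multichoose_eq, Nat.choose_symm_add,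
      Nat.add_right_comm, Nat.add_sub_cancel]

theorem geom_sum_X_pow_eq_mul_invOneSubPow (r n : ℕ) :
    (∑ i ∈ range r, (X : R⟦X⟧) ^ i) ^ n = (1 - X ^ r) ^ n * (invOneSubPow R n).val := by
  rw [← geom_sum_mul_neg, mul_pow, ← invOneSubPow_inv_eq_one_sub_pow, mul_assoc, Units.inv_val,
    mul_one]

theorem coe_geom_sum_X_pow (r n : ℕ) :
    (((∑ i ∈ range r, (Polynomial.X : Polynomial R) ^ i) ^ n : Polynomial R) : R⟦X⟧) =
      (∑ i ∈ range r, X ^ i) ^ n := by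
  simp only [← Polynomial.coeToPowerSeries.ringHom_apply, map_pow, map_sum]
  simp only [Polynomial.coeToPowerSeries.ringHom_apply, Polynomial.coe_X]

theorem euler_coeff_eq_alternating_sum_general {r : ℕ} (hr : 1 ≤ r) (n k : ℕ) :
    ((∑ i ∈ range r, (Polynomial.X : Polynomial R) ^ i) ^ n).coeff k =
      ∑ i ∈ range (k / r + 1),
        (-1) ^ i * (n.choose i : R) * ((n + k - r * i - 1).choose (k - r * i) : R) := by
  rw [← Polynomial.coeff_coe, coe_geom_sum_X_pow, geom_sum_X_pow_eq_mul_invOneSubPow,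
    coeff_one_sub_X_pow_pow_mul hr]
  refine sum_congr rfl fun i hi ↦ ?_
  have hik : r * i ≤ k := by
    rwa [mem_range, Nat.lt_succ_iff, Nat.le_div_iff_mul_le hr, mul_comm] at hi
  rw [coeff_invOneSubPow, Nat.multichoose_eq, Nat.add_sub_assoc hik]

end CommRing

theorem euler_coeff_eq_alternating_sum (r : ℕ) (hr : 1 ≤ r) (n k : ℕ) :
    eulerCoeff r n k =
      ∑ i ∈ Finset.range (k / r + 1),
        (-1 : ℤ) ^ i * (n.choose i : ℤ) * ((n + k - r * i - 1).choose (k - r * i) : ℤ) :=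
  euler_coeff_eq_alternating_sum_general hr n k
end

section
/- For every integer r ≥ 2 and every natural number n, the Euler coefficient ⟨n+1 choose n⟩_r is divisible by n+1 and satisfies ⟨n+1 choose n⟩_r = (n+1) · ( ⟨n choose n⟩_r − ∑_{i=1}^{r-2} i · ⟨n choose n-i-1⟩_r ), where terms with n-i-1 < 0 are taken to be 0 (the identity being an identity of integers). -/
/-!
The operator `X * d/dX` multiplies the coefficient of `X ^ k` by `k`. Comparing coefficients of
`X ^ n` in `X * (P ^ (n + 1))' = (n + 1) * P ^ n * (X * P')` therefore shows that the coefficient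
of `X ^ n` in `P ^ (n + 1)` is `n + 1` times that in `P ^ n * (P - X * P')`. For
`P = 1 + X + ⋯ + X ^ (r - 1)` the last factor is `1 - ∑ i * X ^ (i + 1)`, summed over
`1 ≤ i ≤ r - 2`.
-/

section

open Polynomial Finset

theorem coeff_X_mul_derivative {R : Type*} [Semiring R] (P : R[X]) (k : ℕ) :
    (X * derivative P).coeff k = P.coeff k * k := by
  cases k with
  | zero => simp
  | succ k => rw [coeff_X_mul, coeff_derivative, Nat.cast_succ]

variable {R : Type*} [CommRing R]

theorem sub_mul_coeff_pow_succ (P : R[X]) (m k : ℕ) :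
    (m + 1 - k : R) * (P ^ (m + 1)).coeff k =
      (m + 1) * (P ^ m * (P - X * derivative P)).coeff k := by
  have h_deriv : (P ^ (m + 1)).coeff k * k = (m + 1) * (P ^ m * (X * derivative P)).coeff k := by
    rw [← coeff_X_mul_derivative, derivative_pow_succ, ← coeff_C_mul]
    congr 1
    ring
  rw [mul_sub, coeff_sub, mul_sub, ← h_deriv, ← pow_succ]
  ring

theorem coeff_pow_succ_self (P : R[X]) (n : ℕ) :
    (P ^ (n + 1)).coeff n = (n + 1) * (P ^ n * (P - X * derivative P)).coeff n := by
  simpa only [add_sub_cancel_left, one_mul] using sub_mul_coeff_pow_succ P n n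

theorem geom_sum_sub_X_mul_derivative (s : ℕ) :
    ∑ i ∈ range (s + 1), (X : R[X]) ^ i - X * derivative (∑ i ∈ range (s + 1), X ^ i) =
      1 - ∑ i ∈ range s, C (i : R) * X ^ (i + 1) := by
  have h_monomial (i : ℕ) :
      (X : R[X]) ^ (i + 1) - X * derivative (X ^ (i + 1)) = -(C (i : R) * X ^ (i + 1)) := by
    rw [derivative_X_pow_succ, map_add, map_one]
    ring
  rw [derivative_sum, mul_sum, ← sum_sub_distrib, sum_range_succ']
  simp only [h_monomial, sum_neg_distrib, pow_zero, derivative_one, mul_zero, sub_zero,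
    neg_add_eq_sub]

theorem coeff_mul_one_sub_sum (Q : R[X]) (a : ℕ → R) (s : Finset ℕ) (k : ℕ) :
    (Q * (1 - ∑ i ∈ s, C (a i) * X ^ (i + 1))).coeff k =
      Q.coeff k - ∑ i ∈ s, a i * (if i + 1 ≤ k then Q.coeff (k - i - 1) else 0) := by
  simp only [mul_sub, mul_one, coeff_sub, mul_sum, finsetSum_coeff, mul_left_comm Q, coeff_C_mul,
    coeff_mul_X_pow', Nat.sub_sub]

end

theorem euler_coeff_dvd_and_catalan_like (r : ℕ) (hr : 2 ≤ r) (n : ℕ) :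
    ((n : ℤ) + 1) ∣ eulerCoeff r (n + 1) n ∧
    eulerCoeff r (n + 1) n =
      ((n : ℤ) + 1) *
        (eulerCoeff r n n -
          ∑ i ∈ Finset.Icc 1 (r - 2),
            (i : ℤ) * (if i + 1 ≤ n then eulerCoeff r n (n - i - 1) else 0)) := by
  refine (and_iff_right_of_imp fun h ↦ ⟨_, h⟩).2 ?_
  obtain ⟨s, rfl⟩ := Nat.exists_eq_add_of_le' hr
  have h_range (f : ℕ → ℤ) :
      ∑ i ∈ Finset.range (s + 1), (i : ℤ) * f i = ∑ i ∈ Finset.Icc 1 s, (i : ℤ) * f i := by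
    rw [Finset.sum_range_eq_add_Ico _ (Nat.add_one_pos s), Nat.cast_zero, zero_mul, zero_add,
      Finset.Ico_add_one_right_eq_Icc]
  simp only [eulerCoeff]
  rw [coeff_pow_succ_self, geom_sum_sub_X_mul_derivative, coeff_mul_one_sub_sum, h_range,
    Nat.add_sub_cancel]
end

section
/- For every natural number n ≥ 1, the n-th Catalan number satisfies C_n = C(2n-1, n) − ∑_{i=1}^{n-1} i · C(2n-i-2, n-1), where C(a,b) denotes the ordinary binomial coefficient. -/
/-!
Since `i = C(i, 1)`, the upper Vandermonde identity evaluates the subtracted sum as the single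
binomial coefficient `C(2n - 1, n + 1)`. The claim is then the ballot formula
`C_n = C(2n, n) - C(2n, n + 1)`: expanding both binomials by Pascal's rule, the common term
`C(2n - 1, n) = C(2n - 1, n - 1)` cancels.
-/

open Finset

theorem sum_antidiagonal_choose_mul_choose (n k l : ℕ) :
    ∑ ij ∈ antidiagonal n, ij.1.choose k * ij.2.choose l = (n + 1).choose (k + l + 1) := by
  induction n generalizing k with
  | zero => cases k <;> cases l <;> simp [Nat.choose_eq_zero_of_lt]
  | succ n ih =>
    rw [Nat.sum_antidiagonal_succ]
    cases k with
    | zero =>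
      have hockey_stick := ih 0
      simp only [Nat.choose_zero_right, one_mul, zero_add] at hockey_stick ⊢
      rw [hockey_stick, ← Nat.choose_succ_succ']
    | succ k =>
      simp only [Nat.choose_zero_succ, zero_mul, zero_add, Nat.choose_succ_succ' _ k, add_mul,
        sum_add_distrib, ih]
      rw [show k + 1 + l + 1 = k + l + 1 + 1 by ring, ← Nat.choose_succ_succ']

theorem sum_Icc_mul_choose_sub (n m : ℕ) :
    ∑ i ∈ Icc 1 (n - m), i * (n - i).choose m = (n + 1).choose (m + 2) := by
  have vandermonde := sum_antidiagonal_choose_mul_choose n 1 m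
  rw [Nat.sum_antidiagonal_eq_sum_range_succ (fun i j ↦ i.choose 1 * j.choose m)] at vandermonde
  simp only [Nat.choose_one_right] at vandermonde
  rw [show m + 2 = 1 + m + 1 by ring, ← vandermonde]
  refine sum_subset (fun i hi ↦ ?_) fun i hi hi' ↦ ?_
  · simp only [mem_Icc, mem_range] at hi ⊢
    lia
  · simp only [mem_Icc, mem_range] at hi hi'
    obtain rfl | hlt : i = 0 ∨ n - i < m := by lia
    · exact zero_mul _
    · rw [Nat.choose_eq_zero_of_lt hlt, mul_zero]

theorem catalan_add_choose_eq_centralBinom (n : ℕ) :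
    catalan n + (2 * n).choose (n + 1) = n.centralBinom := by
  have hchoose : (2 * n).choose (n + 1) * (n + 1) = n.centralBinom * n := by
    rw [Nat.choose_succ_right_eq, Nat.centralBinom, two_mul, Nat.add_sub_cancel]
  refine Nat.eq_of_mul_eq_mul_left (Nat.add_one_pos n) ?_
  linear_combination succ_mul_catalan_eq_centralBinom n + hchoose

theorem catalan_succ_add_choose (n : ℕ) :
    catalan (n + 1) + (2 * n + 1).choose (n + 2) = (2 * n + 1).choose (n + 1) := by
  have hballot := catalan_add_choose_eq_centralBinom (n + 1)
  rw [Nat.centralBinom, show 2 * (n + 1) = 2 * n + 1 + 1 by ring, Nat.choose_succ_succ' _ n,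
    Nat.choose_succ_succ' _ (n + 1), ← Nat.choose_symm_half] at hballot
  lia

theorem catalan_eq_choose_sub_sum (n : ℕ) (hn : 1 ≤ n) :
    (catalan n : ℤ) =
      ((2 * n - 1).choose n : ℤ) -
        ∑ i ∈ Finset.Icc 1 (n - 1), (i : ℤ) * ((2 * n - i - 2).choose (n - 1) : ℤ) := by
  obtain ⟨m, rfl⟩ := Nat.exists_eq_add_of_le' hn
  have hsum : ∑ i ∈ Icc 1 m, i * (2 * (m + 1) - i - 2).choose m = (2 * m + 1).choose (m + 2) := by
    convert sum_Icc_mul_choose_sub (2 * m) m using 4 <;> lia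
  rw [eq_sub_iff_add_eq, Nat.add_sub_cancel, show 2 * (m + 1) - 1 = 2 * m + 1 by lia]
  exact_mod_cast hsum ▸ catalan_succ_add_choose m
end

section
/- For every integer r ≥ 1 and all integers m ≥ n > 0, the ballot path counts avoiding r consecutive E-steps satisfy the recurrence s_n(m;r) = s_{n-1}(m;r) + s_n(m-1;r) − s_{n-r}(m-1;r), where s_j(i;r) is taken to be 0 whenever j < 0 or i < j. -/
/-- A word in steps `N = true` (up, `(0,1)`) and `E = false` (right, `(1,0)`) is a
ballot word when every prefix has at least as many `N`-steps as `E`-steps,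
i.e. the corresponding lattice path from `(0,0)` stays weakly above `y = x`. -/
def IsBallot (p : List Bool) : Prop :=
  ∀ q : List Bool, q <+: p → q.count false ≤ q.count true

/-- `sCount r n m` is the number of ballot paths from `(0,0)` to `(n,m)`
(with `n` east-steps and `m` north-steps, staying weakly above `y = x`)
containing no `r` consecutive east-steps. -/
noncomputable def sCount (r n m : ℕ) : ℕ :=
  Set.ncard {p : List Bool |
    p.count false = n ∧ p.count true = m ∧ IsBallot p ∧ ¬ List.replicate r false <:+: p}

/-- The extension of the path counts to integer indices, taken to be `0`
whenever `n < 0` or `m < n`. -/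
noncomputable def sZ (r : ℕ) (n m : ℤ) : ℤ :=
  if 0 ≤ n ∧ n ≤ m then sCount r n.toNat m.toNat else 0

/-! Classify the ballot paths avoiding `E^r` by their last step. Appending `N` to such a path always
gives another one. Appending `E` to one that ends at `(n - 1, m)` stays above the diagonal because
`n ≤ m`, and it creates a run `E^r` exactly when the path is `q N E^(r-1)`. Here `q` can be any
`E^r`-avoiding ballot path to `(n - r, m - 1)`: the run after its `N` ends at `(n - 1, m)`, so it
does not cross the diagonal. These paths account for the subtracted term. -/

section Replicate

variable {α : Type*} {a b : α}

lemma replicate_suffix_append_cons_replicate_iff (hab : b ≠ a) (r k : ℕ) (q : List α) :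
    List.replicate r a <:+ q ++ b :: List.replicate k a ↔ r ≤ k := by
  constructor
  · intro h
    by_contra! hkr
    have hb : b :: List.replicate k a <:+ List.replicate r a :=
      List.suffix_of_suffix_length_le (List.suffix_append _ _) h (by simpa using hkr)
    exact hab (List.eq_of_mem_replicate (hb.mem List.mem_cons_self))
  · intro h
    have hrep : List.replicate r a <:+ List.replicate k a :=
      ⟨List.replicate (k - r) a, by rw [List.replicate_append_replicate, Nat.sub_add_cancel h]⟩
    exact hrep.trans ((List.suffix_cons _ _).trans (List.suffix_append _ _))

lemma replicate_infix_append_cons_replicate_iff (hab : b ≠ a) (r k : ℕ) (q : List α) :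
    List.replicate r a <:+: q ++ b :: List.replicate k a ↔
      List.replicate r a <:+: q ∨ r ≤ k := by
  induction k with
  | zero =>
    rw [List.replicate_zero, List.infix_concat_iff, or_comm,
      ← replicate_suffix_append_cons_replicate_iff hab r 0 q, List.replicate_zero]
  | succ k ih =>
    have hsuffix := replicate_suffix_append_cons_replicate_iff hab r (k + 1) q
    rw [List.replicate_succ', ← List.cons_append, ← List.append_assoc] at hsuffix ⊢
    rw [List.infix_concat_iff, hsuffix, ih]
    grind

lemma replicate_succ_suffix_concat_iff (k : ℕ) (p : List α) :
    List.replicate (k + 1) a <:+ p ++ [a] ↔ List.replicate k a <:+ p := by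
  rw [List.replicate_succ', List.suffix_append_inj_of_length_eq rfl]
  simp

lemma eq_replicate_or_eq_append_cons_replicate {k : ℕ} {p : List α}
    (hk : List.replicate k a <:+ p) (hk' : ¬ List.replicate (k + 1) a <:+ p) :
    p = List.replicate k a ∨ ∃ q b, b ≠ a ∧ p = q ++ b :: List.replicate k a := by
  obtain ⟨t, rfl⟩ := hk
  rcases List.eq_nil_or_concat' t with rfl | ⟨q, b, rfl⟩
  · exact Or.inl (List.nil_append _)
  · refine Or.inr ⟨q, b, ?_, (List.append_cons ..).symm⟩
    rintro rfl
    exact hk' ⟨q, by rw [List.replicate_succ, List.append_cons]⟩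

end Replicate

lemma IsBallot.count_false_le {p : List Bool} (h : IsBallot p) : p.count false ≤ p.count true :=
  h p List.prefix_rfl

lemma isBallot_concat_iff (p : List Bool) (b : Bool) :
    IsBallot (p ++ [b]) ↔ IsBallot p ∧ (p ++ [b]).count false ≤ (p ++ [b]).count true := by
  simp only [IsBallot, List.prefix_concat_iff]
  grind

lemma isBallot_concat_true_iff (p : List Bool) : IsBallot (p ++ [true]) ↔ IsBallot p := by
  rw [isBallot_concat_iff, and_iff_left_iff_imp]
  intro h
  have := h.count_false_le
  simp only [List.count_append, List.count_singleton]
  grind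

lemma isBallot_concat_false_iff (p : List Bool) :
    IsBallot (p ++ [false]) ↔ IsBallot p ∧ p.count false < p.count true := by
  rw [isBallot_concat_iff]
  simp

lemma isBallot_append_replicate_false_iff (p : List Bool) (k : ℕ) :
    IsBallot (p ++ List.replicate k false) ↔
      IsBallot p ∧ p.count false + k ≤ p.count true := by
  induction k with
  | zero => simpa using IsBallot.count_false_le
  | succ k ih =>
    rw [List.replicate_succ', ← List.append_assoc, isBallot_concat_false_iff, ih]
    simp only [List.count_append, List.count_replicate]
    grind

/-- The set of ballot paths to `(n, m)` with no `r` consecutive east-steps, which `sCount r n m`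
counts. -/
def avoidingBallotPaths (r n m : ℕ) : Set (List Bool) :=
  {p | p.count false = n ∧ p.count true = m ∧ IsBallot p ∧ ¬ List.replicate r false <:+: p}

namespace avoidingBallotPaths

variable {r n m k : ℕ} {p q : List Bool}

lemma finite (r n m : ℕ) : (avoidingBallotPaths r n m).Finite := by
  refine (List.finite_length_eq Bool (m + n)).subset ?_
  rintro p ⟨rfl, rfl, -⟩
  exact (List.count_true_add_count_false p).symm

lemma le_of_mem (hp : p ∈ avoidingBallotPaths r n m) : n ≤ m := by
  obtain ⟨rfl, rfl, hballot, -⟩ := hp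
  exact hballot.count_false_le

lemma append_true_cons_replicate_mem_iff :
    q ++ true :: List.replicate k false ∈ avoidingBallotPaths r (n + k) (m + 1) ↔
      q ∈ avoidingBallotPaths r n m ∧ k < r ∧ n + k ≤ m + 1 := by
  have hballot : IsBallot (q ++ true :: List.replicate k false) ↔
      IsBallot q ∧ q.count false + k ≤ q.count true + 1 := by
    rw [List.append_cons, isBallot_append_replicate_false_iff, isBallot_concat_true_iff]
    simp
  simp only [avoidingBallotPaths, Set.mem_ofPred_eq, hballot,
    replicate_infix_append_cons_replicate_iff Bool.true_eq_false_eq_False]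
  simp only [List.count_append, List.count_cons, List.count_replicate]
  grind

lemma concat_true_mem_iff (hr : 1 ≤ r) :
    p ++ [true] ∈ avoidingBallotPaths r n (m + 1) ↔ p ∈ avoidingBallotPaths r n m := by
  have h := append_true_cons_replicate_mem_iff (q := p) (k := 0) (r := r) (n := n) (m := m)
  rw [List.replicate_zero, Nat.add_zero] at h
  rw [h, and_iff_left_iff_imp]
  exact fun hp ↦ ⟨hr, (le_of_mem hp).trans m.le_succ⟩

lemma concat_false_mem_iff :
    p ++ [false] ∈ avoidingBallotPaths (k + 1) (n + 1) m ↔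
      p ∈ avoidingBallotPaths (k + 1) n m ∧ n < m ∧ ¬ List.replicate k false <:+ p := by
  simp only [avoidingBallotPaths, Set.mem_ofPred_eq, isBallot_concat_false_iff,
    List.infix_concat_iff, replicate_succ_suffix_concat_iff,
    List.count_append, List.count_singleton]
  grind

lemma succ_succ_eq_union (hnm : n ≤ m) :
    avoidingBallotPaths (k + 1) (n + 1) (m + 1) =
      (· ++ [true]) '' avoidingBallotPaths (k + 1) (n + 1) m ∪
        (· ++ [false]) ''
          (avoidingBallotPaths (k + 1) n (m + 1) \ {p | List.replicate k false <:+ p}) := by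
  ext p
  rcases List.eq_nil_or_concat' p with rfl | ⟨p, _ | _, rfl⟩
  · simp [avoidingBallotPaths]
  · simp [concat_false_mem_iff, Nat.lt_succ_of_le hnm]
  · simp [concat_true_mem_iff]

lemma inter_suffix_eq_image (h : n + k ≤ m + 1) :
    avoidingBallotPaths (k + 1) (n + k) (m + 1) ∩ {p | List.replicate k false <:+ p} =
      (· ++ true :: List.replicate k false) '' avoidingBallotPaths (k + 1) n m := by
  ext p
  constructor
  · rintro ⟨hp, hsuffix⟩
    have hrun : ¬ List.replicate (k + 1) false <:+ p := fun hs ↦ hp.2.2.2 hs.isInfix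
    rcases eq_replicate_or_eq_append_cons_replicate hsuffix hrun with rfl | ⟨q, b, hb, rfl⟩
    · simp [avoidingBallotPaths, List.count_replicate] at hp
    · obtain rfl := Bool.eq_true_of_not_eq_false hb
      exact ⟨q, (append_true_cons_replicate_mem_iff.1 hp).1, rfl⟩
  · rintro ⟨q, hq, rfl⟩
    exact ⟨append_true_cons_replicate_mem_iff.2 ⟨hq, k.lt_succ_self, h⟩,
      (List.suffix_cons _ _).trans (List.suffix_append _ _)⟩

lemma inter_suffix_eq_empty (h : n < k) :
    avoidingBallotPaths r n m ∩ {p | List.replicate k false <:+ p} = ∅ := by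
  rw [Set.eq_empty_iff_forall_notMem]
  rintro p ⟨⟨rfl, -⟩, hsuffix⟩
  have hcount := hsuffix.sublist.count_le false
  rw [List.count_replicate_self] at hcount
  exact hcount.not_gt h

end avoidingBallotPaths

lemma sCount_eq_ncard (r n m : ℕ) : sCount r n m = (avoidingBallotPaths r n m).ncard :=
  rfl

lemma sCount_eq_zero_of_lt {r n m : ℕ} (h : m < n) : sCount r n m = 0 := by
  have hempty : avoidingBallotPaths r n m = ∅ :=
    Set.eq_empty_of_forall_notMem fun p hp ↦ (avoidingBallotPaths.le_of_mem hp).not_gt h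
  rw [sCount_eq_ncard, hempty, Set.ncard_empty]

lemma sZ_natCast (r n m : ℕ) : sZ r n m = sCount r n m := by
  rcases le_or_gt n m with h | h
  · simp [sZ, h]
  · simp [sZ, sCount_eq_zero_of_lt h]

lemma sZ_of_neg {n : ℤ} (hn : n < 0) (r : ℕ) (m : ℤ) : sZ r n m = 0 :=
  if_neg fun h ↦ hn.not_ge h.1

lemma sCount_succ_succ {k n m : ℕ} (hnm : n ≤ m) :
    sCount (k + 1) (n + 1) (m + 1) +
        (avoidingBallotPaths (k + 1) n (m + 1) ∩ {p | List.replicate k false <:+ p}).ncard =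
      sCount (k + 1) n (m + 1) + sCount (k + 1) (n + 1) m := by
  have hfin := avoidingBallotPaths.finite
  have hdisjoint (S T : Set (List Bool)) :
      Disjoint ((· ++ [true]) '' S) ((· ++ [false]) '' T) := by
    rw [Set.disjoint_left]
    rintro _ ⟨p, -, rfl⟩ ⟨q, -, h⟩
    simp at h
  have hsplit := Set.ncard_inter_add_ncard_sdiff_eq_ncard
    (avoidingBallotPaths (k + 1) n (m + 1)) {p | List.replicate k false <:+ p} (hfin _ _ _)
  simp only [sCount_eq_ncard]
  rw [avoidingBallotPaths.succ_succ_eq_union hnm,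
    Set.ncard_union_eq (hdisjoint _ _) ((hfin _ _ _).image _) ((hfin _ _ _).sdiff.image _),
    Set.ncard_image_of_injective _ (List.append_left_injective _),
    Set.ncard_image_of_injective _ (List.append_left_injective _)]
  omega

lemma ncard_inter_suffix_eq_sZ {k n m : ℕ} (h : n ≤ m + 1) :
    ((avoidingBallotPaths (k + 1) n (m + 1) ∩ {p | List.replicate k false <:+ p}).ncard : ℤ) =
      sZ (k + 1) (n - k) m := by
  rcases le_or_gt k n with hk | hk
  · obtain ⟨n, rfl⟩ := Nat.exists_eq_add_of_le' hk
    rw [avoidingBallotPaths.inter_suffix_eq_image h,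
      Set.ncard_image_of_injective _ (List.append_left_injective _), ← sCount_eq_ncard,
      Nat.cast_add, add_sub_cancel_right, sZ_natCast]
  · rw [avoidingBallotPaths.inter_suffix_eq_empty hk, Set.ncard_empty, sZ_of_neg (by omega),
      Nat.cast_zero]

theorem sCount_recurrence (r : ℕ) (hr : 1 ≤ r) (n m : ℤ) (hn : 0 < n) (hm : n ≤ m) :
    sZ r n m = sZ r (n - 1) m + sZ r n (m - 1) - sZ r (n - r) (m - 1) := by
  obtain ⟨k, rfl⟩ := Nat.exists_eq_add_of_le' hr
  obtain ⟨a, rfl⟩ : ∃ a : ℕ, n = (a + 1 : ℕ) := ⟨(n - 1).toNat, by omega⟩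
  obtain ⟨b, rfl⟩ : ∃ b : ℕ, m = (b + 1 : ℕ) := ⟨(m - 1).toNat, by omega⟩
  have hab : a ≤ b := by omega
  have hlast := sCount_succ_succ (k := k) hab
  have hrun := ncard_inter_suffix_eq_sZ (k := k) (hab.trans b.le_succ)
  have ha : ((a + 1 : ℕ) : ℤ) - 1 = a := by omega
  have hb : ((b + 1 : ℕ) : ℤ) - 1 = b := by omega
  have hak : ((a + 1 : ℕ) : ℤ) - (k + 1 : ℕ) = a - k := by omega
  rw [ha, hb, hak, ← hrun, sZ_natCast, sZ_natCast, sZ_natCast]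
  omega
end

section
/- Let c ≥ 1 and α ≥ 0 be integers and n a natural number with n ≥ α. Then the number of tuples (a_1,…,a_n) with each a_i ∈ {0,1,…,c+1}, total sum a_1+⋯+a_n = cn−α, and partial sums a_1+⋯+a_k ≤ ck for all k = 1,…,n−1, equals the number of tuples (b_1,…,b_n) with each b_i ∈ {0,1,…,c+1}, total sum b_1+⋯+b_n = n+α, and partial sums b_1+⋯+b_k ≤ k+α for all k = 1,…,n−1. -/
/-- The number of tuples `(a 0, …, a (n-1))` with parts in `{0, 1, …, c+1}`,
total sum `s`, and `k`-th partial sum at most `bound k` for `k = 1, …, n-1`. -/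
noncomputable def restrictedCompositions (c n s : ℕ) (bound : ℕ → ℕ) : ℕ :=
  Set.ncard {a : Fin n → ℕ |
    (∀ i, a i ≤ c + 1) ∧ (∑ i, a i = s) ∧
    ∀ k : ℕ, 1 ≤ k → k ≤ n - 1 →
      (∑ i ∈ Finset.univ.filter fun i : Fin n => (i : ℕ) < k, a i) ≤ bound k}

/-!
Replacing `a` by `i ↦ c + 1 - a (n - 1 - i)` is an involution on tuples with parts in `[0, c + 1]`.
It turns the total `s` into `(c + 1) * n - s`, and the partial sum of length `n - k` into the
partial sum of length `k` shifted by `(c + 1) * k - s`. For `s = c * n - α` this exchanges the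
bounds `c * k` and `k + α`, so the involution injects each of the two families into the other.
-/

/-- The tuple `a` read backwards with every part `x` replaced by its complement `m - x`. It is
meant for tuples with parts at most `m`, so that the subtraction does not truncate. -/
def reverseComplement {n : ℕ} (m : ℕ) (a : Fin n → ℕ) : Fin n → ℕ :=
  fun i => m - a i.rev

theorem sum_filter_val_lt_rev {M : Type*} [AddCommMonoid M] {n : ℕ} (f : Fin n → M) (k : ℕ) :
    ∑ i : Fin n with i.val < k, f i.rev = ∑ i : Fin n with ¬ i.val < n - k, f i := by
  refine Finset.sum_equiv Fin.revPerm (fun i => ?_) (fun _ _ => rfl)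
  simp only [Finset.mem_filter, Finset.mem_univ, true_and, Fin.revPerm_apply, Fin.val_rev]
  omega

section reverseComplement

variable {n m : ℕ} {a : Fin n → ℕ}

theorem reverseComplement_le (m : ℕ) (a : Fin n → ℕ) (i : Fin n) : reverseComplement m a i ≤ m :=
  Nat.sub_le _ _

theorem reverseComplement_reverseComplement (ha : ∀ i, a i ≤ m) :
    reverseComplement m (reverseComplement m a) = a := by
  funext i
  simp only [reverseComplement, Fin.rev_rev, Nat.sub_sub_self (ha i)]

theorem injOn_reverseComplement (m : ℕ) :
    Set.InjOn (reverseComplement m) {a : Fin n → ℕ | ∀ i, a i ≤ m} :=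
  Set.LeftInvOn.injOn (f₁' := reverseComplement m) fun _ ha =>
    reverseComplement_reverseComplement ha

theorem sum_filter_reverseComplement_add_sum (ha : ∀ i, a i ≤ m) {k : ℕ} (hk : k ≤ n) :
    ∑ i : Fin n with i.val < k, reverseComplement m a i + ∑ i, a i =
      m * k + ∑ i : Fin n with i.val < n - k, a i := by
  have complement : ∑ i : Fin n with i.val < k, reverseComplement m a i +
      ∑ i : Fin n with i.val < k, a i.rev = m * k := by
    simp [← Finset.sum_add_distrib, reverseComplement, ha, Fin.card_filter_val_lt, hk, mul_comm]
  calc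
    _ = ∑ i : Fin n with i.val < k, reverseComplement m a i +
        (∑ i : Fin n with i.val < n - k, a i + ∑ i : Fin n with i.val < k, a i.rev) := by
      rw [sum_filter_val_lt_rev, Finset.sum_filter_add_sum_filter_not]
    _ = m * k + ∑ i : Fin n with i.val < n - k, a i := by
      rw [← complement]
      ring

theorem sum_reverseComplement_add_sum (ha : ∀ i, a i ≤ m) :
    ∑ i, reverseComplement m a i + ∑ i, a i = m * n := by
  simpa using sum_filter_reverseComplement_add_sum ha le_rfl

end reverseComplement

theorem restrictedCompositions_le_of_reverseComplement {c n s t : ℕ} {bound bound' : ℕ → ℕ}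
    (hst : s + t = (c + 1) * n)
    (hbound : ∀ k, 0 < k → k < n → (c + 1) * k + bound (n - k) ≤ bound' k + s) :
    restrictedCompositions c n s bound ≤ restrictedCompositions c n t bound' := by
  refine Set.ncard_le_ncard_of_injOn (reverseComplement (c + 1)) ?_
    ((injOn_reverseComplement (c + 1)).mono fun _ ha => ha.1)
    ((Set.finite_Iic fun _ => c + 1).subset fun _ hb => hb.1)
  rintro a ⟨ha, rfl, hprefix⟩
  refine ⟨reverseComplement_le (c + 1) a, ?_, fun k hk hkn => ?_⟩
  · have := sum_reverseComplement_add_sum ha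
    omega
  · refine Nat.le_of_add_le_add_right (b := ∑ i, a i) ?_
    calc
      _ = (c + 1) * k + ∑ i : Fin n with i.val < n - k, a i :=
        sum_filter_reverseComplement_add_sum ha (by omega)
      _ ≤ (c + 1) * k + bound (n - k) := by
        gcongr
        exact hprefix (n - k) (by omega) (by omega)
      _ ≤ bound' k + ∑ i, a i := hbound k hk (by omega)

theorem restricted_compositions_reflection_general (c α n : ℕ) (hα : α ≤ c * n) :
    restrictedCompositions c n (c * n - α) (fun k => c * k) =
      restrictedCompositions c n (n + α) (fun k => k + α) := by
  have total : (c * n - α) + (n + α) = (c + 1) * n := by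
    rw [add_one_mul]
    omega
  apply le_antisymm
  · refine restrictedCompositions_le_of_reverseComplement total fun k _ hk => ?_
    have : c * k + c * (n - k) = c * n := by rw [← mul_add, Nat.add_sub_of_le hk.le]
    simp only [add_one_mul]
    omega
  · refine restrictedCompositions_le_of_reverseComplement ((add_comm _ _).trans total)
      fun k _ hk => ?_
    simp only [add_one_mul]
    omega

/-- The number of compositions of `cn - α` into `n` parts from `[0, c+1]` with
partial sums `a 1 + ⋯ + a k ≤ c k` for all `k = 1, …, n-1` equals the number of
compositions of `n + α` into `n` parts from `[0, c+1]` with partial sums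
`b 1 + ⋯ + b k ≤ k + α` for all `k = 1, …, n-1`. -/
theorem restricted_compositions_reflection (c : ℕ) (hc : 1 ≤ c) (α : ℕ) (n : ℕ)
    (hn : α ≤ n) :
    restrictedCompositions c n (c * n - α) (fun k => c * k) =
      restrictedCompositions c n (n + α) (fun k => k + α) :=
  restricted_compositions_reflection_general c α n (hn.trans (Nat.le_mul_of_pos_left n hc))
end

section
/- For every natural number n, the number of peakless Motzkin paths from (0,0) to (n,0) — lattice paths with steps u=(1,1), d=(1,-1), h=(1,0) staying weakly above the x-axis, ending on the x-axis, and containing neither the consecutive step pattern uu nor the pattern ud — equals ∑_{i=0}^{⌊n/3⌋} C(n-i, 2i) · Cat_i, where C denotes the ordinary binomial coefficient and Cat_i = (1/(i+1))·C(2i,i) is the i-th Catalan number. -/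
/-- A Motzkin word: a list of `y`-increments taken from `{1, -1, 0}` (up-step
`u = (1,1)`, down-step `d = (1,-1)`, horizontal step `h = (1,0)`). The path from
`(0,0)` to `(n,0)` stays weakly above the `x`-axis when every prefix has
nonnegative sum, and ends on the `x`-axis when the total sum is `0`. It is
peakless when it contains neither `uu` nor `ud` as consecutive steps. -/
noncomputable def peaklessMotzkinCount (n : ℕ) : ℕ :=
  Set.ncard {p : List ℤ |
    (∀ x ∈ p, x = 1 ∨ x = -1 ∨ x = 0) ∧
    p.length = n ∧ p.sum = 0 ∧
    (∀ q : List ℤ, q <+: p → 0 ≤ q.sum) ∧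
    ¬ [(1 : ℤ), 1] <:+: p ∧ ¬ [(1 : ℤ), -1] <:+: p}

/-!
In a peakless path from height `a` down to the `x`-axis every up step is immediately followed by a
horizontal step, so such a path is a word in the letters `uh`, `d`, `h`. If it has `i` up steps and
`j` other steps, then it has `j` letters, and the `2 * i + a` letters other than `h` form a word
leading from `a` to `0` without going below `0`; these words are counted by the ballot number, which
for `a = 0` is the Catalan number. Choosing the positions of those letters contributes the factor
`j.choose (2 * i + a)`. Splitting off the first letter gives a recursion on `j` for the paths, which
matches Pascal's rule combined with the ballot recursion.
-/

lemma forall_prefix_cons_iff {α : Type*} {P : List α → Prop} {x : α} {l : List α} :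
    (∀ q, q <+: x :: l → P q) ↔ P [] ∧ ∀ q, q <+: l → P (x :: q) := by
  constructor
  · intro h
    exact ⟨h [] List.nil_prefix, fun q hq ↦ h (x :: q) (by simpa using hq)⟩
  · rintro ⟨h_nil, h_cons⟩ q hq
    rcases List.prefix_cons_iff.1 hq with rfl | ⟨t, rfl, ht⟩
    · exact h_nil
    · exact h_cons t ht

/-- The condition defining `peaklessMotzkinCount`, for paths that start at height `a` instead of
`0` and descend to the `x`-axis. Heights are integers, so that a down step needs no side condition;
the empty prefix excludes `a < 0`. -/
structure IsPeaklessFrom (a : ℤ) (p : List ℤ) : Prop where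
  step : ∀ x ∈ p, x = 1 ∨ x = -1 ∨ x = 0
  add_sum_eq_zero : a + p.sum = 0
  nonneg_of_prefix : ∀ q : List ℤ, q <+: p → 0 ≤ a + q.sum
  not_up_up : ¬ [(1 : ℤ), 1] <:+: p
  not_up_down : ¬ [(1 : ℤ), -1] <:+: p

namespace IsPeaklessFrom

variable {a : ℤ} {p : List ℤ}

lemma nonneg (h : IsPeaklessFrom a p) : 0 ≤ a := by
  simpa using h.nonneg_of_prefix [] List.nil_prefix

lemma nil_iff : IsPeaklessFrom a [] ↔ a = 0 := by
  refine ⟨fun h ↦ by simpa using h.add_sum_eq_zero, ?_⟩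
  rintro rfl
  constructor <;> simp

lemma cons_iff {x : ℤ} :
    IsPeaklessFrom a (x :: p) ↔
      (x = 1 ∨ x = -1 ∨ x = 0) ∧ 0 ≤ a ∧
        (x = 1 → p.head? ≠ some 1 ∧ p.head? ≠ some (-1)) ∧ IsPeaklessFrom (a + x) p := by
  have nonneg_iff : (∀ q : List ℤ, q <+: x :: p → 0 ≤ a + q.sum) ↔
      0 ≤ a ∧ ∀ q : List ℤ, q <+: p → 0 ≤ a + x + q.sum := by
    simp only [forall_prefix_cons_iff, List.sum_nil, add_zero, List.sum_cons, add_assoc]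
  have infix_iff (y : ℤ) : ¬ [1, y] <:+: x :: p ↔ (x = 1 → p.head? ≠ some y) ∧ ¬ [1, y] <:+: p := by
    rw [List.infix_cons_iff, List.cons_prefix_cons, List.singleton_prefix_iff_head?_eq_some]
    tauto
  constructor
  · rintro ⟨hstep, hsum, hpre, huu, hud⟩
    rw [List.forall_mem_cons] at hstep
    rw [List.sum_cons, ← add_assoc] at hsum
    rw [nonneg_iff] at hpre
    rw [infix_iff] at huu hud
    exact ⟨hstep.1, hpre.1, fun hx ↦ ⟨huu.1 hx, hud.1 hx⟩, hstep.2, hsum, hpre.2, huu.2, hud.2⟩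
  · rintro ⟨hx, ha, hhead, hp⟩
    exact ⟨List.forall_mem_cons.2 ⟨hx, hp.step⟩,
      by rw [List.sum_cons, ← add_assoc, hp.add_sum_eq_zero],
      nonneg_iff.2 ⟨ha, hp.nonneg_of_prefix⟩,
      (infix_iff 1).2 ⟨fun h ↦ (hhead h).1, hp.not_up_up⟩,
      (infix_iff (-1)).2 ⟨fun h ↦ (hhead h).2, hp.not_up_down⟩⟩

lemma horizontal_cons_iff : IsPeaklessFrom a (0 :: p) ↔ IsPeaklessFrom a p := by
  simpa [cons_iff] using nonneg

lemma down_cons_iff (ha : 0 ≤ a) : IsPeaklessFrom a (-1 :: p) ↔ IsPeaklessFrom (a - 1) p := by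
  simp [cons_iff, ha, sub_eq_add_neg]

lemma up_cons_iff (ha : 0 ≤ a) :
    IsPeaklessFrom a (1 :: p) ↔ ∃ q, p = 0 :: q ∧ IsPeaklessFrom (a + 1) q := by
  constructor
  · intro h
    obtain ⟨-, -, hhead, hp⟩ := cons_iff.1 h
    obtain ⟨hhead_up, hhead_down⟩ := hhead rfl
    rcases p with _ | ⟨y, q⟩
    · have := nil_iff.1 hp
      omega
    · rcases hp.step y List.mem_cons_self with rfl | rfl | rfl
      · exact absurd rfl hhead_up
      · exact absurd rfl hhead_down
      · exact ⟨q, rfl, horizontal_cons_iff.1 hp⟩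
  · rintro ⟨q, rfl, hq⟩
    simpa [cons_iff (x := 1), ha] using horizontal_cons_iff.2 hq

end IsPeaklessFrom

/-- The peakless paths from height `a` down to the `x`-axis with `i` up steps and `j` other steps.
The index `i` is an integer, and the set is empty for `i < 0`, so that the recursion on the first
step needs no case distinction. -/
def peaklessPaths (a i : ℤ) (j : ℕ) : Set (List ℤ) :=
  {p | IsPeaklessFrom a p ∧ (p.count 1 : ℤ) = i ∧ (p.length : ℤ) = i + j}

namespace peaklessPaths

lemma eq_empty_of_height_neg {a : ℤ} (ha : a < 0) (i : ℤ) (j : ℕ) : peaklessPaths a i j = ∅ :=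
  Set.eq_empty_of_forall_notMem fun _ hp ↦ ha.not_ge hp.1.nonneg

lemma eq_empty_of_up_neg (a : ℤ) {i : ℤ} (hi : i < 0) (j : ℕ) : peaklessPaths a i j = ∅ :=
  Set.eq_empty_of_forall_notMem fun _ hp ↦ hi.not_ge (hp.2.1 ▸ Int.natCast_nonneg _)

lemma mem_zero_iff {a i : ℤ} {p : List ℤ} :
    p ∈ peaklessPaths a i 0 ↔ p = [] ∧ a = 0 ∧ i = 0 := by
  constructor
  · rintro ⟨hp, hcount, hlength⟩
    have all_up : ∀ x ∈ p, 1 = x := List.count_eq_length.1 (by omega)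
    rcases p with _ | ⟨x, p⟩
    · exact ⟨rfl, IsPeaklessFrom.nil_iff.1 hp, by simpa using hcount.symm⟩
    · obtain rfl : 1 = x := all_up x List.mem_cons_self
      obtain ⟨q, rfl, -⟩ := (IsPeaklessFrom.up_cons_iff hp.nonneg).1 hp
      exact absurd (all_up 0 (by simp)) one_ne_zero
  · rintro ⟨rfl, rfl, rfl⟩
    exact ⟨IsPeaklessFrom.nil_iff.2 rfl, by simp⟩

lemma horizontal_cons_mem_iff {a i : ℤ} {j : ℕ} {p : List ℤ} :
    0 :: p ∈ peaklessPaths a i (j + 1) ↔ p ∈ peaklessPaths a i j := by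
  simp [peaklessPaths, IsPeaklessFrom.horizontal_cons_iff, ← add_assoc]

lemma down_cons_mem_iff {a i : ℤ} {j : ℕ} {p : List ℤ} (ha : 0 ≤ a) :
    -1 :: p ∈ peaklessPaths a i (j + 1) ↔ p ∈ peaklessPaths (a - 1) i j := by
  simp [peaklessPaths, IsPeaklessFrom.down_cons_iff ha, ← add_assoc]

lemma up_cons_mem_iff {a i : ℤ} {j : ℕ} {p : List ℤ} (ha : 0 ≤ a) :
    1 :: p ∈ peaklessPaths a i (j + 1) ↔
      ∃ q, p = 0 :: q ∧ q ∈ peaklessPaths (a + 1) (i - 1) j := by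
  have index_iff (q : List ℤ) :
      (((1 :: 0 :: q).count 1 : ℤ) = i ∧ ((1 :: 0 :: q).length : ℤ) = i + (j + 1 : ℕ)) ↔
        (q.count 1 : ℤ) = i - 1 ∧ (q.length : ℤ) = i - 1 + j := by
    simp only [List.count_cons_self, List.count_cons_of_ne (zero_ne_one' ℤ), List.length_cons]
    omega
  constructor
  · rintro ⟨hp, hindex⟩
    obtain ⟨q, rfl, hq⟩ := (IsPeaklessFrom.up_cons_iff ha).1 hp
    exact ⟨q, rfl, hq, (index_iff q).1 hindex⟩
  · rintro ⟨q, rfl, hq, hindex⟩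
    exact ⟨(IsPeaklessFrom.up_cons_iff ha).2 ⟨q, rfl, hq⟩, (index_iff q).2 hindex⟩

lemma nil_notMem_succ {a i : ℤ} {j : ℕ} : [] ∉ peaklessPaths a i (j + 1) := by
  rintro ⟨-, hcount, hlength⟩
  simp only [List.count_nil, List.length_nil] at hcount hlength
  omega

lemma succ_eq {a : ℤ} (ha : 0 ≤ a) (i : ℤ) (j : ℕ) :
    peaklessPaths a i (j + 1) =
      List.cons 0 '' peaklessPaths a i j ∪ List.cons (-1) '' peaklessPaths (a - 1) i j ∪
        (fun q ↦ 1 :: 0 :: q) '' peaklessPaths (a + 1) (i - 1) j := by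
  ext p
  constructor
  · intro hp
    rcases p with _ | ⟨x, p⟩
    · exact absurd hp nil_notMem_succ
    rcases hp.1.step x List.mem_cons_self with rfl | rfl | rfl
    · obtain ⟨q, rfl, hq⟩ := (up_cons_mem_iff ha).1 hp
      exact Or.inr ⟨q, hq, rfl⟩
    · exact Or.inl (Or.inr ⟨p, (down_cons_mem_iff ha).1 hp, rfl⟩)
    · exact Or.inl (Or.inl ⟨p, horizontal_cons_mem_iff.1 hp, rfl⟩)
  · rintro ((⟨q, hq, rfl⟩ | ⟨q, hq, rfl⟩) | ⟨q, hq, rfl⟩)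
    · exact horizontal_cons_mem_iff.2 hq
    · exact (down_cons_mem_iff ha).2 hq
    · exact (up_cons_mem_iff ha).2 ⟨q, rfl, hq⟩

lemma finite (a i : ℤ) (j : ℕ) : (peaklessPaths a i j).Finite := by
  induction j generalizing a i with
  | zero => exact (Set.finite_singleton []).subset fun p hp ↦ (mem_zero_iff.1 hp).1
  | succ j ih =>
    rcases lt_or_ge a 0 with ha | ha
    · exact eq_empty_of_height_neg ha i (j + 1) ▸ Set.finite_empty
    · rw [succ_eq ha]
      exact (((ih a i).image _).union ((ih (a - 1) i).image _)).union ((ih (a + 1) (i - 1)).image _)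

lemma ncard_zero (a i : ℤ) : (peaklessPaths a i 0).ncard = if a = 0 ∧ i = 0 then 1 else 0 := by
  split_ifs with h
  · rw [Set.ncard_eq_one]
    exact ⟨[], Set.ext fun p ↦ by simp [mem_zero_iff, h]⟩
  · rw [Set.ncard_eq_zero (finite a i 0)]
    exact Set.eq_empty_of_forall_notMem fun p hp ↦ h (mem_zero_iff.1 hp).2

lemma ncard_succ {a : ℤ} (ha : 0 ≤ a) (i : ℤ) (j : ℕ) :
    (peaklessPaths a i (j + 1)).ncard =
      (peaklessPaths a i j).ncard + (peaklessPaths (a - 1) i j).ncard +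
        (peaklessPaths (a + 1) (i - 1) j).ncard := by
  have up_injective : Function.Injective fun q : List ℤ ↦ 1 :: 0 :: q :=
    List.cons_injective.comp List.cons_injective
  have horizontal_disjoint_down : Disjoint (List.cons 0 '' peaklessPaths a i j)
      (List.cons (-1) '' peaklessPaths (a - 1) i j) := by
    rw [Set.disjoint_left]
    rintro _ ⟨q, -, rfl⟩ ⟨r, -, h⟩
    simp at h
  have disjoint_up : Disjoint
      (List.cons 0 '' peaklessPaths a i j ∪ List.cons (-1) '' peaklessPaths (a - 1) i j)
      ((fun q ↦ 1 :: 0 :: q) '' peaklessPaths (a + 1) (i - 1) j) := by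
    rw [Set.disjoint_left]
    rintro _ (⟨q, -, rfl⟩ | ⟨q, -, rfl⟩) ⟨r, -, h⟩ <;> simp at h
  have finite_horizontal := (finite a i j).image (List.cons 0)
  have finite_down := (finite (a - 1) i j).image (List.cons (-1))
  rw [succ_eq ha, Set.ncard_union_eq disjoint_up (finite_horizontal.union finite_down)
      ((finite (a + 1) (i - 1) j).image _),
    Set.ncard_union_eq horizontal_disjoint_down finite_horizontal finite_down,
    Set.ncard_image_of_injective _ List.cons_injective,
    Set.ncard_image_of_injective _ List.cons_injective,
    Set.ncard_image_of_injective _ up_injective]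

end peaklessPaths

/-- The ballot number: the number of words in `i` up steps and `i + a` down steps that lead from
height `a` to height `0` without going below it, as given by the recursion on the first step. -/
def ballotNumber : ℕ → ℕ → ℕ
  | 0, _ => 1
  | i + 1, 0 => ballotNumber i 1
  | i + 1, a + 1 => ballotNumber (i + 1) a + ballotNumber i (a + 2)

lemma add_add_one_mul_ballotNumber (i a : ℕ) :
    (i + a + 1) * ballotNumber i a = (a + 1) * (2 * i + a).choose i := by
  fun_induction ballotNumber i a with
  | case1 a => simp
  | case2 i ih =>
    have pascal : (2 * (i + 1)).choose (i + 1) = 2 * (2 * i + 1).choose i := by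
      rw [mul_add_one, Nat.choose_succ_succ', Nat.choose_symm_half, ← two_mul]
    simpa only [add_zero, zero_add, one_mul, pascal] using ih
  | case3 i a ih_down ih_up =>
    have pascal : (2 * (i + 1) + (a + 1)).choose (i + 1) =
        (2 * i + a + 2).choose i + (2 * i + a + 2).choose (i + 1) := by
      rw [← Nat.choose_succ_succ']
      congr 1
      ring
    have absorb : (2 * i + a + 2).choose i * (i + a + 2) =
        (2 * i + a + 2).choose (i + 1) * (i + 1) := by
      rw [Nat.choose_succ_right_eq]
      congr 1
      omega
    rw [show 2 * (i + 1) + a = 2 * i + a + 2 by ring] at ih_down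
    rw [show 2 * i + (a + 2) = 2 * i + a + 2 by ring] at ih_up
    simp only [Nat.succ_eq_add_one, pascal]
    have cancel : 0 < i + a + 2 := by omega
    refine Nat.eq_of_mul_eq_mul_left cancel ?_
    linear_combination (i + a + 3) * ih_down + (i + a + 2) * ih_up + absorb

lemma ballotNumber_zero_right (i : ℕ) : ballotNumber i 0 = catalan i := by
  have h := add_add_one_mul_ballotNumber i 0
  rw [add_zero, add_zero, zero_add, one_mul, ← Nat.centralBinom_eq_two_mul_choose,
    ← succ_mul_catalan_eq_centralBinom] at h
  exact Nat.eq_of_mul_eq_mul_left i.succ_pos h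

theorem ncard_peaklessPaths (a i j : ℕ) :
    (peaklessPaths a i j).ncard = j.choose (2 * i + a) * ballotNumber i a := by
  induction j generalizing a i with
  | zero =>
    rw [peaklessPaths.ncard_zero]
    split_ifs with h
    · obtain ⟨rfl, rfl⟩ : a = 0 ∧ i = 0 := by exact_mod_cast h
      simp [ballotNumber]
    · rw [Nat.choose_eq_zero_of_lt (by omega), zero_mul]
  | succ j ih =>
    have down_succ (a i : ℕ) : (peaklessPaths ((a + 1 : ℕ) - 1) i j).ncard =
        j.choose (2 * i + a) * ballotNumber i a := by
      simpa using ih a i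
    have up_succ (a i : ℕ) : (peaklessPaths (a + 1) ((i + 1 : ℕ) - 1) j).ncard =
        j.choose (2 * i + (a + 1)) * ballotNumber i (a + 1) := by
      simpa using ih (a + 1) i
    have down_zero (i : ℕ) : (peaklessPaths ((0 : ℕ) - 1) i j).ncard = 0 := by
      simp [peaklessPaths.eq_empty_of_height_neg]
    have up_zero (a : ℕ) : (peaklessPaths (a + 1) ((0 : ℕ) - 1) j).ncard = 0 := by
      simp [peaklessPaths.eq_empty_of_up_neg]
    rw [peaklessPaths.ncard_succ (Int.natCast_nonneg a), ih a i]
    rcases i with _ | i <;> rcases a with _ | a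
    · rw [down_zero, up_zero]
      simp
    · rw [down_succ, up_zero, ← add_assoc, Nat.choose_succ_succ']
      simp only [ballotNumber]
      ring
    · rw [down_zero, up_succ, show 2 * (i + 1) + 0 = 2 * i + 1 + 1 by ring, Nat.choose_succ_succ',
        ballotNumber]
      ring
    · rw [down_succ, up_succ, show 2 * i + (a + 1 + 1) = 2 * (i + 1) + a by ring, ← add_assoc,
        Nat.choose_succ_succ', ballotNumber]
      ring

lemma peaklessMotzkinCount_eq_ncard (n : ℕ) :
    peaklessMotzkinCount n = {p : List ℤ | IsPeaklessFrom 0 p ∧ p.length = n}.ncard := by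
  rw [peaklessMotzkinCount]
  congr 1
  ext p
  constructor
  · rintro ⟨hstep, hlength, hsum, hpre, huu, hud⟩
    exact ⟨⟨hstep, by rwa [zero_add], by simpa only [zero_add] using hpre, huu, hud⟩, hlength⟩
  · rintro ⟨⟨hstep, hsum, hpre, huu, hud⟩, hlength⟩
    simp only [zero_add] at hsum hpre
    exact ⟨hstep, hlength, hsum, hpre, huu, hud⟩

theorem peaklessMotzkinCount_eq_sum_ncard (n : ℕ) :
    peaklessMotzkinCount n = ∑ i ∈ Finset.range (n + 1), (peaklessPaths 0 i (n - i)).ncard := by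
  have paths_eq_biUnion :
      {p : List ℤ | IsPeaklessFrom 0 p ∧ p.length = n} =
        ⋃ i ∈ Finset.range (n + 1), peaklessPaths 0 (i : ℕ) (n - i) := by
    ext p
    simp only [Set.mem_iUnion, Finset.mem_range, exists_prop]
    constructor
    · rintro ⟨hp, hlength⟩
      have count_le : p.count 1 ≤ p.length := List.count_le_length
      exact ⟨p.count 1, by omega, hp, rfl, by omega⟩
    · rintro ⟨i, hi, hp, -, hlength⟩
      exact ⟨hp, by omega⟩
  have paths_disjoint : (Finset.range (n + 1) : Set ℕ).PairwiseDisjoint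
      fun i : ℕ ↦ peaklessPaths 0 i (n - i) := fun i _ k _ hik ↦
    Set.disjoint_left.2 fun p hi hk ↦ hik (Int.ofNat.inj (hi.2.1.symm.trans hk.2.1))
  rw [peaklessMotzkinCount_eq_ncard, paths_eq_biUnion, ← finsum_mem_coe_finset]
  exact (Finset.finite_toSet _).ncard_biUnion (fun i _ ↦ peaklessPaths.finite 0 i (n - i))
    paths_disjoint

theorem peakless_motzkin_count (n : ℕ) :
    peaklessMotzkinCount n =
      ∑ i ∈ Finset.range (n / 3 + 1), (n - i).choose (2 * i) * catalan i := by
  rw [peaklessMotzkinCount_eq_sum_ncard]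
  have ncard_eq (i : ℕ) : (peaklessPaths 0 i (n - i)).ncard =
      (n - i).choose (2 * i) * catalan i := by
    simpa [ballotNumber_zero_right] using ncard_peaklessPaths 0 i (n - i)
  simp only [ncard_eq]
  symm
  refine Finset.sum_subset (Finset.range_mono (by omega)) fun i _ hi ↦ ?_
  rw [Finset.mem_range] at hi
  rw [Nat.choose_eq_zero_of_lt (by omega), zero_mul]
end
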